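/- arXiv:1407.0226 — 7 statements merged into one kernel-verified Lean document; each statement's English description precedes it below -/
import Mathlib

section
/- Let k be a field of characteristic zero, let V be a finite-dimensional k-vector space, and let T_1, ..., T_m be finitely many linear subspaces of End(V). Then there exists a vector v ∈ V such that for every i = 1, ..., m, the dimension of the subspace T_i·v equals the maximum over all w ∈ V of the dimension of T_i·w (i.e., v is simultaneously a rank-vector for all the subspaces T_1, ..., T_m). -/
open Module

theorem rank_vector_aux
    (K : Type) [Field K] (V : Type) [AddCommGroup V] [Module K V] [FiniteDimensional K V]
    (T : Submodule K (Module.End K V)) :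
    ∃ P : MvPolynomial (Fin (finrank K V)) K, P ≠ 0 ∧ ∀ x, MvPolynomial.eval x P ≠ 0 → ∀ w : V,
      finrank K (T.map (LinearMap.applyₗ w)) ≤
        finrank K (T.map (LinearMap.applyₗ ((finBasis K V).equivFun.symm x))) := by
  obtain ⟨w, hw⟩ : ∃ w : V, ∀ w' : V, finrank K (T.map (LinearMap.applyₗ w')) ≤
      finrank K (T.map (LinearMap.applyₗ w)) := by
    have hb : BddAbove (Set.range fun w : V => finrank K (T.map (LinearMap.applyₗ w))) := by
      refine ⟨finrank K V, ?_⟩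
      rintro _ ⟨w, rfl⟩
      exact Submodule.finrank_le _
    obtain ⟨w, hw⟩ := Nat.sSup_mem (Set.range_nonempty _) hb
    refine ⟨w, fun w' => ?_⟩
    have h := le_csSup hb ⟨w', rfl⟩
    rw [← hw] at h
    exact h
  set r := finrank K (T.map (LinearMap.applyₗ w)) with hr
  let u := finBasis K (T.map (LinearMap.applyₗ w))
  have hS : ∀ j, ∃ S ∈ T, S w = (u j : V) := fun j => by
    obtain ⟨S, hS, h⟩ := (u j).2
    exact ⟨S, hS, h⟩
  choose S hST hSu using hS
  have hli : LinearIndependent K (fun j => S j w) := by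
    simp only [hSu]
    exact u.linearIndependent.map' (Submodule.subtype _) (Submodule.ker_subtype _)
  obtain ⟨f, hf⟩ := LinearMap.exists_leftInverse_of_injective
    (Fintype.linearCombination K (fun j => S j w))
    (LinearMap.ker_eq_bot.2 hli.fintypeLinearCombination_injective)
  have hfS : ∀ j, f (S j w) = Pi.single j 1 := fun j => by
    have := LinearMap.congr_fun hf (Pi.single j 1)
    simpa using this
  let b := finBasis K V
  let M : Matrix (Fin r) (Fin r) (MvPolynomial (Fin (finrank K V)) K) := Matrix.of fun j l =>
    ∑ i, MvPolynomial.C (f (S j (b i)) l) * MvPolynomial.X i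
  have hM : ∀ x, MvPolynomial.eval x M.det =
      (Matrix.of fun j l => f (S j (b.equivFun.symm x)) l).det := fun x => by
    rw [RingHom.map_det]
    congr 1
    ext j l
    simp [M, Basis.equivFun_symm_apply, mul_comm]
  refine ⟨M.det, ?_, ?_⟩
  · intro h0
    have h := hM (b.equivFun w)
    rw [h0, LinearEquiv.symm_apply_apply] at h
    have h1 : (Matrix.of fun j l => f (S j w) l) = (1 : Matrix (Fin r) (Fin r) K) := by
      ext j l
      simp [hfS, Matrix.one_apply, Pi.single_apply, eq_comm]
    rw [h1] at h
    simp at h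
  · intro x hx w'
    refine (hw w').trans ?_
    rw [hM] at hx
    have h1 := Matrix.linearIndependent_rows_of_det_ne_zero hx
    have h2 : LinearIndependent K (fun j => S j (b.equivFun.symm x)) :=
      LinearIndependent.of_comp f h1
    have h3 : LinearIndependent K (fun j => (⟨S j (b.equivFun.symm x), S j, hST j, rfl⟩ :
        T.map (LinearMap.applyₗ (b.equivFun.symm x)))) :=
      LinearIndependent.of_comp (Submodule.subtype _) h2
    simpa using h3.fintype_card_le_finrank

/-- **Simultaneous rank-vectors.** Let `K` be a field of characteristic zero, `V` a
finite-dimensional `K`-vector space and `T 1, …, T m` finitely many linear subspaces of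
`End(V)`.  Then there is a vector `v ∈ V` which is simultaneously a rank-vector for all of
them, i.e. for every `i` the dimension of `T i · v` is the maximum over `w ∈ V` of the
dimension of `T i · w`. -/
theorem exists_simultaneous_rank_vector
    (K : Type) [Field K] [CharZero K]
    (V : Type) [AddCommGroup V] [Module K V] [FiniteDimensional K V]
    (m : ℕ) (T : Fin m → Submodule K (Module.End K V)) :
    ∃ v : V, ∀ i : Fin m, ∀ w : V,
      finrank K ((T i).map (LinearMap.applyₗ w)) ≤
        finrank K ((T i).map (LinearMap.applyₗ v)) := by
  choose P hP0 hP using fun i => rank_vector_aux K V (T i)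
  have h : ∏ i, P i ≠ 0 := Finset.prod_ne_zero_iff.2 fun i _ => hP0 i
  obtain ⟨x, hx⟩ : ∃ x, MvPolynomial.eval x (∏ i, P i) ≠ 0 := by
    by_contra hc
    push Not at hc
    exact h (MvPolynomial.funext fun x => by simpa using hc x)
  rw [map_prod, Finset.prod_ne_zero_iff] at hx
  exact ⟨_, fun i => hP i x (hx i (Finset.mem_univ i))⟩
end

section
/- Let k be a field of characteristic zero, let V be a finite-dimensional k-vector space, and let T_p ⊆ T_{p-1} ⊆ ⋯ ⊆ T_1 be a chain of linear subspaces of End(V) with T_p ≠ 0. Then there exist integers s_1 ≥ s_2 ≥ ⋯ ≥ s_p ≥ 1, a linearly independent family of vectors v_1, ..., v_{s_1} in V, and linear subspaces T_{k,j} ⊆ End(V) for 1 ≤ k ≤ p and 1 ≤ j ≤ s_k, such that: (1) for each k, T_k is the internal direct sum T_{k,1} ⊕ T_{k,2} ⊕ ⋯ ⊕ T_{k,s_k}, and T_{k+1,j} ⊆ T_{k,j} whenever 1 ≤ k ≤ p−1 and 1 ≤ j ≤ s_{k+1}; (2) dim T_{k,j} = dim (T_{k,j}·v_j) for all 1 ≤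 j ≤ s_k and 1 ≤ k ≤ p; (3) T_{k,j}·v_i = 0 for all 1 ≤ i < j ≤ s_k and 1 ≤ k ≤ p; (4) T(v) ∈ T_{k,i}·v_i for every T ∈ T_{k,j}, every v ∈ V, and all 1 ≤ i < j ≤ s_k, 1 ≤ k ≤ p. -/
open Module

section ChainHelpers

variable {K : Type} [Field K] {V : Type} [AddCommGroup V] [Module K V]

/-- Linear independence persists along a line, for all but finitely many parameters. -/
lemma cd_li_cofinite {n : ℕ} (a b : Fin n → V) (h : LinearIndependent K a) :
    ∀ᶠ e : K in Filter.cofinite, LinearIndependent K (fun i => a i + e • b i) := by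
  obtain ⟨φ, hφ⟩ := LinearMap.exists_leftInverse_of_injective
    (Fintype.linearCombination K a) (by
      rw [LinearMap.ker_eq_bot]
      rw [Fintype.linearIndependent_iff] at h
      rw [injective_iff_map_eq_zero]
      intro c hc
      ext i
      exact h c (by simpa [Fintype.linearCombination_apply] using hc) i)
  have ha : ∀ i, φ (a i) = Pi.single i 1 := by
    intro i
    have := LinearMap.congr_fun hφ (Pi.single i 1)
    simpa using this
  let B : Matrix (Fin n) (Fin n) K := Matrix.of fun i j => φ (b i) j
  let P : Polynomial K := (1 + (Polynomial.X : Polynomial K) • B.map Polynomial.C).det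
  have hev : ∀ e, P.eval e = (1 + e • B).det := by
    intro e
    show Polynomial.eval e (Matrix.det _) = _
    rw [← Polynomial.coe_evalRingHom, RingHom.map_det]
    congr 1
    ext i j
    simp [Matrix.one_apply]
    by_cases hij : i = j <;> simp [hij, mul_comm]
  have hP : P ≠ 0 := by
    intro h0
    have := hev 0
    simp [h0] at this
  have hfin : {e | P.IsRoot e}.Finite := Polynomial.finite_setOfPred_isRoot hP
  refine Filter.mem_of_superset hfin.compl_mem_cofinite ?_
  intro e he
  have hdet : (1 + e • B).det ≠ 0 := by
    rw [← hev]; exact he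
  have hli := Matrix.linearIndependent_rows_of_det_ne_zero hdet
  refine LinearIndependent.of_comp φ ?_
  have heq : (φ ∘ fun i => a i + e • b i) = fun i => (1 + e • B) i := by
    ext i j
    simp [ha, B, Matrix.one_apply, Pi.single_apply, eq_comm]
  rw [heq]
  exact hli

lemma cd_le_finrank [FiniteDimensional K V] {n : ℕ} (S : Submodule K (End K V)) (v : V)
    (g : Fin n → V) (hg : ∀ i, g i ∈ S.map (LinearMap.applyₗ (R := K) (M₂ := V) v))
    (h : LinearIndependent K g) :
    n ≤ finrank K (S.map (LinearMap.applyₗ (R := K) (M₂ := V) v)) := by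
  have : LinearIndependent K
      (fun i => (⟨g i, hg i⟩ : S.map (LinearMap.applyₗ (R := K) (M₂ := V) v))) :=
    LinearIndependent.of_comp (Submodule.subtype _) h
  simpa using this.fintype_card_le_finrank

lemma cd_exists_basis (S : Submodule K (End K V)) [FiniteDimensional K V] (v : V) :
    ∃ g : Fin (finrank K (S.map (LinearMap.applyₗ (R := K) (M₂ := V) v))) → End K V,
      (∀ i, g i ∈ S) ∧ LinearIndependent K (fun i => g i v) ∧
      Submodule.span K (Set.range fun i => g i v) =
        S.map (LinearMap.applyₗ (R := K) (M₂ := V) v) := by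
  let b := finBasis K (S.map (LinearMap.applyₗ (R := K) (M₂ := V) v))
  have hb : ∀ i, ∃ g ∈ S, g v = (b i : V) := fun i => by
    obtain ⟨g, hg, h⟩ := (b i).2
    exact ⟨g, hg, h⟩
  choose g hg hgb using hb
  refine ⟨g, hg, ?_, ?_⟩
  · simp only [hgb]
    exact b.linearIndependent.map' (Submodule.subtype _) (Submodule.ker_subtype _)
  · simp only [hgb]
    have := congrArg (Submodule.map (Submodule.subtype _)) b.span_eq
    rw [Submodule.map_span, ← Set.range_comp] at this
    simpa [Function.comp_def] using this

lemma cd_rank_le [FiniteDimensional K V] (S : Submodule K (End K V)) (v x : V) :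
    ∀ᶠ e : K in Filter.cofinite,
      finrank K (S.map (LinearMap.applyₗ (R := K) (M₂ := V) v)) ≤
      finrank K (S.map (LinearMap.applyₗ (R := K) (M₂ := V) (v + e • x))) := by
  obtain ⟨g, hg, hli, -⟩ := cd_exists_basis S v
  filter_upwards [cd_li_cofinite _ (fun i => g i x) hli] with e he
  exact cd_le_finrank S _ _ (fun i => ⟨g i, hg i, by simp⟩) he

lemma cd_rank_lt [FiniteDimensional K V] (S : Submodule K (End K V)) (v x : V)
    (f : End K V) (hf : f ∈ S) (hfv : f v = 0)
    (hfx : f x ∉ S.map (LinearMap.applyₗ (R := K) (M₂ := V) v)) :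
    ∀ᶠ e : K in Filter.cofinite,
      finrank K (S.map (LinearMap.applyₗ (R := K) (M₂ := V) v)) <
      finrank K (S.map (LinearMap.applyₗ (R := K) (M₂ := V) (v + e • x))) := by
  obtain ⟨g, hg, hli, hsp⟩ := cd_exists_basis S v
  have hli2 : LinearIndependent K (Fin.cons (f x) (fun i => g i v) : Fin (_ + 1) → V) := by
    rw [linearIndependent_finCons]
    exact ⟨hli, by rwa [hsp]⟩
  have hne : ∀ᶠ e : K in Filter.cofinite, e ≠ 0 := by
    simp [Filter.eventually_cofinite]
  filter_upwards [cd_li_cofinite _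
    (Fin.cons 0 (fun i => g i x) : Fin (_ + 1) → V) hli2, hne] with e he hne
  refine cd_le_finrank S _ _ (fun i => ?_) he
  refine Fin.cases ?_ (fun i => ?_) i
  · exact ⟨e⁻¹ • f, S.smul_mem _ hf, by simp [hfv, hne]⟩
  · exact ⟨g i, hg i, by simp⟩

/-- A simultaneous generic vector. -/
lemma cd_generic [CharZero K] [FiniteDimensional K V] {p : ℕ}
    (S : Fin p → Submodule K (End K V)) :
    ∃ v : V, ∀ m, ∀ f ∈ S m, f v = 0 → ∀ x,
      f x ∈ (S m).map (LinearMap.applyₗ (R := K) (M₂ := V) v) := by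
  let r : V → ℕ := fun v =>
    ∑ m, finrank K ((S m).map (LinearMap.applyₗ (R := K) (M₂ := V) v))
  have hbd : ∀ v, r v ≤ ∑ _m : Fin p, finrank K V := fun v =>
    Finset.sum_le_sum fun m _ => Submodule.finrank_le _
  obtain ⟨v, hv⟩ : ∃ v, ∀ w, r w ≤ r v := by
    have hfin : (Set.range r).Finite :=
      (Set.finite_Iic (∑ _m : Fin p, finrank K V)).subset (by rintro _ ⟨v, rfl⟩; exact hbd v)
    obtain ⟨_, ⟨v, rfl⟩, h⟩ := Set.exists_max_image (Set.range r) id hfin ⟨_, 0, rfl⟩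
    exact ⟨v, fun w => h _ ⟨w, rfl⟩⟩
  refine ⟨v, fun m f hf hfv x => ?_⟩
  by_contra hfx
  have h1 := cd_rank_lt (S m) v x f hf hfv hfx
  have h2 : ∀ᶠ e : K in Filter.cofinite, ∀ m,
      finrank K ((S m).map (LinearMap.applyₗ (R := K) (M₂ := V) v)) ≤
      finrank K ((S m).map (LinearMap.applyₗ (R := K) (M₂ := V) (v + e • x))) :=
    Filter.eventually_all.2 fun m => cd_rank_le (S m) v x
  obtain ⟨e, he1, he2⟩ := (h1.and h2).exists
  have : r v < r (v + e • x) :=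
    Finset.sum_lt_sum (fun m _ => he2 m) ⟨m, Finset.mem_univ _, he1⟩
  exact absurd (hv (v + e • x)) (by omega)

lemma cd_extend {M : Type} [AddCommGroup M] [Module K M] (W U N : Submodule K M)
    (hWU : W ≤ U) (hd : Disjoint W N) :
    ∃ W', W ≤ W' ∧ W' ≤ U ∧ Disjoint W' N ∧ W' ⊔ (U ⊓ N) = U := by
  obtain ⟨C, hC, hc⟩ := (hd.mono_right (inf_le_right : U ⊓ N ≤ N)).exists_isCompl
  refine ⟨C ⊓ U, le_inf hC hWU, inf_le_right, ?_, ?_⟩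
  · have := hc.disjoint
    rw [disjoint_iff] at this ⊢
    rw [← this, inf_assoc]
  · have h : U ⊓ N ≤ U := inf_le_left
    have h2 := hc.codisjoint
    rw [codisjoint_iff, sup_comm] at h2
    rw [sup_comm, ← sup_inf_assoc_of_le C h, h2, top_inf_eq]

lemma cd_chain {M : Type} [AddCommGroup M] [Module K M] {p : ℕ}
    (S : Fin p → Submodule K M) (hS : Antitone S) (N : Submodule K M) :
    ∃ W : Fin p → Submodule K M, Antitone W ∧
      ∀ m, W m ≤ S m ∧ Disjoint (W m) N ∧ W m ⊔ (S m ⊓ N) = S m := by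
  induction p with
  | zero => exact ⟨fun _ => ⊥, fun i => i.elim0, fun i => i.elim0⟩
  | succ p ih =>
    obtain ⟨W, hW, h⟩ := ih (fun i => S i.succ)
      (fun i j hij => hS (Fin.succ_le_succ_iff.2 hij))
    obtain ⟨W0, hW0, hd, hs⟩ : ∃ W0, (∀ i, W i ≤ W0) ∧ Disjoint W0 N ∧
        W0 ≤ S 0 ∧ W0 ⊔ (S 0 ⊓ N) = S 0 := by
      rcases p with _ | p
      · obtain ⟨W', -, h2, h3, h4⟩ := cd_extend ⊥ (S 0) N bot_le disjoint_bot_left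
        exact ⟨W', fun i => i.elim0, h3, h2, h4⟩
      · obtain ⟨W', h1, h2, h3, h4⟩ := cd_extend (W 0) (S 0) N
          ((h 0).1.trans (hS (Fin.zero_le _))) (h 0).2.1
        exact ⟨W', fun i => (hW (Fin.zero_le i)).trans h1, h3, h2, h4⟩
    refine ⟨Fin.cons W0 W, ?_, ?_⟩
    · intro i j
      refine Fin.cases ?_ (fun i => ?_) i <;> refine Fin.cases ?_ (fun j => ?_) j
      · simp
      · intro _; simpa using hW0 j
      · intro h; simp at h
      · intro h; simpa using hW (Fin.succ_le_succ_iff.1 h)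
    · intro m
      refine Fin.cases ?_ (fun i => ?_) m
      · simpa using ⟨hs.1, hd, hs.2⟩
      · simpa using h i

lemma cd_step [CharZero K] [FiniteDimensional K V] {p : ℕ}
    (S : Fin p → Submodule K (End K V)) (hS : Antitone S) :
    ∃ (v : V) (W : Fin p → Submodule K (End K V)), Antitone W ∧
      (∀ m, W m ≤ S m) ∧ (∀ m, ∀ f ∈ W m, f v = 0 → f = 0) ∧
      (∀ m, W m ⊔ (S m ⊓ LinearMap.ker (LinearMap.applyₗ (R := K) (M₂ := V) v)) = S m) ∧
      (∀ m, ∀ f ∈ S m, f v = 0 → ∀ x,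
        f x ∈ (W m).map (LinearMap.applyₗ (R := K) (M₂ := V) v)) := by
  obtain ⟨v, hv⟩ := cd_generic S
  obtain ⟨W, hW, h⟩ := cd_chain S hS (LinearMap.ker (LinearMap.applyₗ (R := K) (M₂ := V) v))
  refine ⟨v, W, hW, fun m => (h m).1, fun m f hf hfv => ?_, fun m => (h m).2.2,
    fun m f hf hfv x => ?_⟩
  · exact Submodule.disjoint_def.1 (h m).2.1 f hf (by simpa using hfv)
  · obtain ⟨g, hg, hgx⟩ := hv m f hf hfv x
    rw [SetLike.mem_coe, ← (h m).2.2, Submodule.mem_sup] at hg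
    obtain ⟨a, ha, b, hb, rfl⟩ := hg
    refine ⟨a, ha, ?_⟩
    have hb2 : b v = 0 := by simpa using hb.2
    rw [← hgx]
    simp [hb2]

/-- The whole infinite sequence of steps. -/
lemma cd_seq [CharZero K] [FiniteDimensional K V] {p : ℕ}
    (T : Fin p → Submodule K (End K V)) (hT : Antitone T) :
    ∃ (S : ℕ → Fin p → Submodule K (End K V)) (v : ℕ → V)
      (W : ℕ → Fin p → Submodule K (End K V)),
      S 0 = T ∧ (∀ j, Antitone (S j)) ∧
      (∀ j m, S (j + 1) m =
        S j m ⊓ LinearMap.ker (LinearMap.applyₗ (R := K) (M₂ := V) (v j))) ∧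
      (∀ j, Antitone (W j)) ∧
      (∀ j m, W j m ≤ S j m) ∧ (∀ j m, ∀ f ∈ W j m, f (v j) = 0 → f = 0) ∧
      (∀ j m, W j m ⊔ S (j + 1) m = S j m) ∧
      (∀ j m, ∀ f ∈ S (j + 1) m, ∀ x,
        f x ∈ (W j m).map (LinearMap.applyₗ (R := K) (M₂ := V) (v j))) := by
  choose v W h1 h2 h3 h4 h5 using
    fun S : {S : Fin p → Submodule K (End K V) // Antitone S} => cd_step S.1 S.2
  let S : ℕ → {S : Fin p → Submodule K (End K V) // Antitone S} := fun n =>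
    Nat.rec ⟨T, hT⟩ (fun _ S => ⟨fun m => S.1 m ⊓
      LinearMap.ker (LinearMap.applyₗ (R := K) (M₂ := V) (v S)),
      fun i j hij => inf_le_inf_right _ (S.2 hij)⟩) n
  refine ⟨fun j => (S j).1, fun j => v (S j), fun j => W (S j), rfl, fun j => (S j).2,
    fun j m => rfl, fun j => h1 _, fun j => h2 _, fun j => h3 _, fun j => h4 _, ?_⟩
  intro j m f hf x
  exact h5 (S j) m f hf.1 (by simpa using hf.2) x

end ChainHelpers

/-- **Theorem 2.3 (decomposition associated to a chain of subspaces of endomorphisms).**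
Given a chain `T (p-1) ≤ … ≤ T 1 ≤ T 0` (here `T 0` plays the role of `T_1` of the paper and
`T (p-1)` the role of `T_p`) of linear subspaces of `End(V)` with `T (p-1) ≠ 0`, there are a
partition `s 0 ≥ s 1 ≥ … ≥ s (p-1) ≥ 1`, a linearly independent family `v 0, …, v (s 0 - 1)`
and subspaces `W m j ⊆ End(V)` (`0 ≤ m < p`, `0 ≤ j < s m`) such that:
(1) `T m` is the internal direct sum of the `W m j`, `j < s m`, and `W (m+1) j ≤ W m j`;
(2) `dim (W m j) = dim (W m j · v j)`;
(3) `W m j · v i = 0` for `i < j < s m`;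
(4) `f x ∈ W m i · v i` for all `f ∈ W m j`, `x ∈ V`, `i < j < s m`. -/
theorem chain_decomposition
    (K : Type) [Field K] [CharZero K]
    (V : Type) [AddCommGroup V] [Module K V] [FiniteDimensional K V]
    (p : ℕ) (hp : 0 < p) (T : Fin p → Submodule K (Module.End K V))
    (hchain : ∀ i j : Fin p, i ≤ j → T j ≤ T i)
    (hbot : T ⟨p - 1, by omega⟩ ≠ ⊥) :
    ∃ (s : Fin p → ℕ) (v : ℕ → V) (W : Fin p → ℕ → Submodule K (Module.End K V)),
      (∀ i j : Fin p, i ≤ j → s j ≤ s i) ∧ (∀ m : Fin p, 1 ≤ s m) ∧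
      LinearIndependent K (fun j : Fin (s ⟨0, hp⟩) => v j) ∧
      -- (1) internal direct sums, compatible with the chain
      (∀ m : Fin p, iSupIndep (fun j : Fin (s m) => W m j)) ∧
      (∀ m : Fin p, (⨆ j : Fin (s m), W m j) = T m) ∧
      (∀ (m : ℕ) (h : m + 1 < p), ∀ j < s ⟨m + 1, h⟩,
        W ⟨m + 1, h⟩ j ≤ W ⟨m, by omega⟩ j) ∧
      -- (2)
      (∀ m : Fin p, ∀ j < s m,
        finrank K (W m j) = finrank K ((W m j).map (LinearMap.applyₗ (v j)))) ∧
      -- (3)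
      (∀ m : Fin p, ∀ i j : ℕ, i < j → j < s m →
        (W m j).map (LinearMap.applyₗ (v i)) = ⊥) ∧
      -- (4)
      (∀ m : Fin p, ∀ i j : ℕ, i < j → j < s m →
        ∀ f ∈ W m j, ∀ x : V, f x ∈ (W m i).map (LinearMap.applyₗ (v i))) := by
  obtain ⟨S, v, W, hS0, hSanti, hSsucc, hWanti, hWS, hinj, hsup, himg⟩ :=
    cd_seq T (fun i j hij => hchain i j hij)
  have hstep : ∀ j m, S (j + 1) m ≤ S j m := fun j m => by
    rw [hSsucc]; exact inf_le_left
  have hmono : ∀ m, Antitone (fun j => S j m) := fun m =>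
    antitone_nat_of_succ_le fun j => hstep j m
  -- elements of later stages kill earlier vectors
  have hkill : ∀ m i j, i < j → ∀ f ∈ S j m, f (v i) = 0 := by
    intro m i j hij f hf
    have := hmono m (Nat.succ_le_of_lt hij) hf
    simp only [Nat.succ_eq_add_one, hSsucc] at this
    simpa using this.2
  have hWbot : ∀ j m, W j m = ⊥ → S j m = ⊥ := by
    intro j m hw
    have h1 := hsup j m
    rw [hw, bot_sup_eq] at h1
    rw [eq_bot_iff]
    intro f hf
    rw [← h1] at hf
    rw [Submodule.mem_bot]
    ext x
    have := himg j m f hf x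
    rw [hw] at this
    simpa using this
  have hlt : ∀ j m, S j m ≠ ⊥ → S (j + 1) m < S j m := by
    intro j m hne
    refine lt_of_le_of_ne (hstep j m) fun heq => hne (hWbot j m ?_)
    rw [eq_bot_iff]
    intro f hf
    rw [Submodule.mem_bot]
    refine hinj j m f hf (hkill m j (j + 1) (Nat.lt_succ_self j) f ?_)
    rw [heq]; exact hWS j m hf
  have hex : ∀ m, ∃ j, S j m = ⊥ := by
    intro m
    by_contra! hcon
    have hfr : ∀ j, finrank K (S j m) + j ≤ finrank K (S 0 m) := by
      intro j
      induction j with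
      | zero => simp
      | succ j ih =>
        have := Submodule.finrank_lt_finrank_of_lt (hlt j m (hcon j))
        omega
    have := hfr (finrank K (S 0 m) + 1)
    omega
  classical
  let s : Fin p → ℕ := fun m => Nat.find (hex m)
  have hs_bot : ∀ m, S (s m) m = ⊥ := fun m => Nat.find_spec (hex m)
  have hs_ne : ∀ m j, j < s m → S j m ≠ ⊥ := fun m j hj => Nat.find_min (hex m) hj
  refine ⟨s, v, fun m j => W j m, ?_, ?_, ?_, ?_, ?_, ?_, ?_, ?_, ?_⟩
  · intro i j hij
    refine Nat.find_min' (hex j) ?_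
    rw [eq_bot_iff, ← hs_bot i]
    exact hSanti _ hij
  · intro m
    rw [Nat.one_le_iff_ne_zero]
    intro h0
    have h1 := hs_bot m
    rw [h0, hS0] at h1
    refine hbot (eq_bot_iff.2 (h1 ▸ hchain m _ ?_))
    rw [Fin.le_def]
    have := m.2
    show m.1 ≤ p - 1
    omega
  · rw [Fintype.linearIndependent_iff]
    intro c hc
    -- largest index first
    have key : ∀ n, ∀ i : Fin (s ⟨0, hp⟩), s ⟨0, hp⟩ - i.1 ≤ n → c i = 0 := by
      intro n
      induction n with
      | zero => intro i hi; have := i.2; omega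
      | succ n ih =>
        intro i hi
        have hne := hs_ne _ i.1 i.2
        obtain ⟨f, hf, hf0⟩ := Submodule.exists_mem_ne_zero_of_ne_bot
          (fun h => hne (hWbot _ _ h))
        have h1 := congrArg f hc
        rw [map_sum, Finset.sum_eq_single i] at h1
        · simp only [map_smul, map_zero, smul_eq_zero] at h1
          exact h1.resolve_right fun h => hf0 (hinj _ _ f hf h)
        · intro k _ hk
          rcases lt_or_gt_of_ne hk with h | h
          · rw [map_smul, hkill _ k.1 i.1 h f (hWS _ _ hf), smul_zero]
          · have h' : i.1 < k.1 := h
            have := k.2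
            rw [ih k (by omega), zero_smul, map_zero]
        · simp
    exact fun i => key _ i le_rfl
  · intro m
    rw [iSupIndep_iff_finsetSum_eq_zero_imp_eq_zero]
    intro t w hw hsum i hi
    have key : ∀ n, ∀ i ∈ t, i.1 = n → w i = 0 := by
      intro n
      induction n using Nat.strong_induction_on with
      | _ n ih =>
        rintro i hi rfl
        have h1 := LinearMap.congr_fun hsum (v i)
        rw [LinearMap.sum_apply, Finset.sum_eq_single i] at h1
        · exact hinj _ m _ (hw i hi) h1
        · intro k hkt hk
          rcases lt_or_gt_of_ne hk with h | h
          · rw [ih k.1 h k hkt rfl, LinearMap.zero_apply]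
          · exact hkill m i.1 k.1 h _ (hWS _ _ (hw k hkt))
        · exact fun h => absurd hi h
    exact key _ i hi rfl
  · intro m
    refine le_antisymm (iSup_le fun j => (hWS _ m).trans ?_) ?_
    · rw [← hS0]; exact hmono m (Nat.zero_le _)
    · have key : ∀ n, n ≤ s m → T m ≤ (⨆ j : Fin (s m), W j m) ⊔ S n m := by
        intro n
        induction n with
        | zero => intro _; rw [hS0]; exact le_sup_right
        | succ n ih =>
          intro hn
          refine (ih (by omega)).trans (sup_le le_sup_left ?_)
          rw [← hsup n m]
          exact sup_le_sup_right (le_iSup (fun j : Fin (s m) => W j m) ⟨n, by omega⟩) _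
      simpa [hs_bot m] using key (s m) le_rfl
  · intro m h j _
    exact hWanti j (by rw [Fin.le_def]; show m ≤ m + 1; omega)
  · intro m j _
    rw [← LinearMap.range_domRestrict, LinearMap.finrank_range_of_inj]
    rw [injective_iff_map_eq_zero]
    intro f hf
    exact Subtype.ext (hinj j m f.1 f.2 hf)
  · intro m i j hij _
    rw [eq_bot_iff]
    rintro _ ⟨f, hf, rfl⟩
    simpa using hkill m i j hij f (hWS _ _ hf)
  · intro m i j hij _ f hf x
    exact himg i m f (hmono m (Nat.succ_le_of_lt hij) (hWS _ _ hf)) x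
end

section
/- Let k be a field of characteristic zero, let V be a finite-dimensional k-vector space, let T_p ⊆ T_{p-1} ⊆ ⋯ ⊆ T_1 be a chain of linear subspaces of End(V) with T_p ≠ 0, and let 1 ≤ p_0 ≤ p. Assume that every element of T_1 is a nilpotent endomorphism of V and that ST = TS for all T ∈ T_1 and S ∈ T_{p_0}. Then there exist integers s_1 ≥ s_2 ≥ ⋯ ≥ s_p ≥ 1, a linearly independent family v_1, ..., v_{s_1} in V, and linear subspaces T_{k,j} ⊆ End(V) for 1 ≤ k ≤ p, 1 ≤ j ≤ s_k, satisfying: (1) T_k = T_{k,1} ⊕ ⋯ ⊕ T_{k,s_k} (internal direct sum) for each k, with T_{k+1,j} ⊆ T_{k,j} whenever j ≤ s_{k+1}; (2) dim T_{k,j} = dim (T_{k,j}·v_j) for all j ≤ s_k; (3) T_{k,j}·v_i = 0 for all 1 ≤ i < j ≤ s_k; (4) T(v) ∈ T_{k,i}·v_i for every T ∈ T_{k,j}, every v ∈ V and all 1 ≤ i < j ≤ s_k; and moreover (5) T_{1,1}·v_1 ∩ span_k{v_1, ..., v_{s_{p_0}}} = 0. -/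
open Module

/-- A linearly independent family stays independent under a generic perturbation. -/
theorem aux_perturb {K V ι : Type*} [Field K] [AddCommGroup V] [Module K V]
    [FiniteDimensional K V] (w b : ι → V) (hw : LinearIndependent K w) :
    ∀ᶠ t : K in Filter.cofinite, LinearIndependent K (fun i => w i + t • b i) := by
  classical
  obtain ⟨g, hg⟩ := LinearMap.exists_leftInverse_of_injective
    (Finsupp.linearCombination K w) (LinearMap.ker_eq_bot.2 hw)
  let L : Module.End K V := (Finsupp.linearCombination K b) ∘ₗ g
  have hL : ∀ i, L (w i) = b i := by
    intro i
    have := LinearMap.congr_fun hg (Finsupp.single i 1)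
    simp at this
    simp [L, this]
  have hfin : ((fun t : K => -t⁻¹) ⁻¹' (spectrum K L)).Finite := by
    apply (Module.End.finite_spectrum L).preimage
    intro x _ y _ h
    simpa using h
  filter_upwards [hfin.compl_mem_cofinite] with t ht
  have hinj : LinearMap.ker (LinearMap.id + t • L : V →ₗ[K] V) = ⊥ := by
    rw [LinearMap.ker_eq_bot']
    intro x hx
    by_contra hne
    by_cases h0 : t = 0
    · subst h0; simp at hx; exact hne hx
    apply ht
    apply Module.End.HasEigenvalue.mem_spectrum
    apply Module.End.hasEigenvalue_of_hasEigenvector (x := x)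
    refine ⟨?_, hne⟩
    rw [Module.End.mem_eigenspace_iff]
    have h1 : t • L x = -x := by
      simp at hx
      exact eq_neg_of_add_eq_zero_right hx
    have : L x = t⁻¹ • (t • L x) := by rw [smul_smul, inv_mul_cancel₀ h0, one_smul]
    rw [this, h1]; simp
  have := hw.map' _ hinj
  have e : (fun i => w i + t • b i) = ⇑(LinearMap.id + t • L : V →ₗ[K] V) ∘ w := by
    funext i
    simp [hL]
  rw [e]
  exact this

theorem aux_semicont {K V : Type*} [Field K] [AddCommGroup V] [Module K V]
    [FiniteDimensional K V] (U : Submodule K (Module.End K V)) (v x : V) :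
    ∀ᶠ t : K in Filter.cofinite, finrank K (U.map (LinearMap.applyₗ v)) ≤
      finrank K (U.map (LinearMap.applyₗ (v + t • x))) := by
  let B := finBasis K (U.map (LinearMap.applyₗ v))
  have hB : ∀ i, ∃ A ∈ U, A v = (B i : V) := fun i => (B i).2
  choose A hA hAv using hB
  have hli : LinearIndependent K (fun i => A i v) := by
    simp_rw [hAv]
    exact B.linearIndependent.map' (Submodule.subtype _) (Submodule.ker_subtype _)
  filter_upwards [aux_perturb _ (fun i => A i x) hli] with t ht
  have h2 : LinearIndependent K (fun i => (⟨A i (v + t • x), A i, hA i, rfl⟩ :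
      U.map (LinearMap.applyₗ (v + t • x)))) := by
    apply LinearIndependent.of_comp (Submodule.subtype _)
    have e : (fun i => A i v + t • A i x) = fun i => A i (v + t • x) := by
      funext i
      simp
    rw [e] at ht
    exact ht
  simpa using h2.fintype_card_le_finrank

theorem aux_strict {K V : Type*} [Field K] [AddCommGroup V] [Module K V]
    [FiniteDimensional K V] (U : Submodule K (Module.End K V)) (v x : V)
    (S : Module.End K V) (hS : S ∈ U) (hSv : S v = 0)
    (hSx : S x ∉ U.map (LinearMap.applyₗ v)) :
    ∀ᶠ t : K in Filter.cofinite, finrank K (U.map (LinearMap.applyₗ v)) <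
      finrank K (U.map (LinearMap.applyₗ (v + t • x))) := by
  let B := finBasis K (U.map (LinearMap.applyₗ v))
  have hB : ∀ i, ∃ A ∈ U, A v = (B i : V) := fun i => (B i).2
  choose A hA hAv using hB
  have hli : LinearIndependent K (fun i => A i v) := by
    simp_rw [hAv]
    exact B.linearIndependent.map' (Submodule.subtype _) (Submodule.ker_subtype _)
  have hli2 : LinearIndependent K (Fin.snoc (fun i => A i v) (S x) : Fin (_ + 1) → V) := by
    rw [linearIndependent_finSnoc]
    refine ⟨hli, fun h => hSx ?_⟩
    refine Submodule.span_le.2 ?_ h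
    rintro _ ⟨i, rfl⟩
    exact ⟨A i, hA i, rfl⟩
  have h0 : ∀ᶠ t : K in Filter.cofinite, t ≠ 0 := by
    simp [Filter.eventually_cofinite]
  filter_upwards [aux_perturb _ (Fin.snoc (fun i => A i x) 0 : Fin (_ + 1) → V) hli2, h0]
    with t ht ht0
  have hmem : ∀ i, (Fin.snoc (fun i => A i v) (S x) : Fin (_ + 1) → V) i +
      t • (Fin.snoc (fun i => A i x) 0 : Fin (_ + 1) → V) i ∈
      U.map (LinearMap.applyₗ (v + t • x)) := by
    intro i
    refine Fin.lastCases ?_ (fun i => ?_) i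
    · refine ⟨t⁻¹ • S, U.smul_mem _ hS, ?_⟩
      simp [hSv, smul_smul, inv_mul_cancel₀ ht0]
    · refine ⟨A i, hA i, ?_⟩
      simp
  have h2 : LinearIndependent K (fun i => (⟨_, hmem i⟩ :
      U.map (LinearMap.applyₗ (v + t • x)))) := by
    apply LinearIndependent.of_comp (Submodule.subtype _)
    exact ht
  have h3 := h2.fintype_card_le_finrank
  rw [Fintype.card_fin] at h3
  exact h3

theorem aux_generic {K V ι : Type*} [Field K] [CharZero K] [AddCommGroup V] [Module K V]
    [FiniteDimensional K V] [Fintype ι] (U : ι → Submodule K (Module.End K V)) :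
    ∃ v : V, ∀ m, ∀ S ∈ U m, S v = 0 → ∀ x, S x ∈ (U m).map (LinearMap.applyₗ v) := by
  let F : V → ℕ := fun v => ∑ m, finrank K ((U m).map (LinearMap.applyₗ v))
  have hbdd : BddAbove (Set.range F) := by
    refine ⟨∑ m : ι, finrank K V, ?_⟩
    rintro _ ⟨v, rfl⟩
    exact Finset.sum_le_sum fun m _ => Submodule.finrank_le _
  obtain ⟨v, hv⟩ := Nat.sSup_mem (Set.range_nonempty F) hbdd
  refine ⟨v, fun m S hS hSv x => ?_⟩
  by_contra hSx
  have h1 : ∀ᶠ t : K in Filter.cofinite, ∀ m', finrank K ((U m').map (LinearMap.applyₗ v)) ≤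
      finrank K ((U m').map (LinearMap.applyₗ (v + t • x))) :=
    Filter.eventually_all.2 fun m' => aux_semicont _ _ _
  obtain ⟨t, ht1, ht2⟩ := (h1.and (aux_strict _ v x S hS hSv hSx)).exists
  have : F v < F (v + t • x) :=
    Finset.sum_lt_sum (fun m' _ => ht1 m') ⟨m, Finset.mem_univ _, ht2⟩
  have h3 : F (v + t • x) ≤ F v := by
    rw [hv]; exact le_csSup hbdd ⟨_, rfl⟩
  omega

theorem aux_compl_step {K E : Type*} [Field K] [AddCommGroup E] [Module K E]
    (R A W : Submodule K E) (hWA : W ≤ A) (hW : Disjoint W R) :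
    ∃ W', W ≤ W' ∧ W' ≤ A ∧ Disjoint W' R ∧ W' ⊔ (A ⊓ R) = A := by
  obtain ⟨C, hC1, hC2⟩ := (hW.mono_right (inf_le_right : A ⊓ R ≤ R)).exists_isCompl
  refine ⟨C ⊓ A, le_inf hC1 hWA, inf_le_right, ?_, ?_⟩
  · rw [disjoint_iff, inf_assoc]; exact hC2.inf_eq_bot
  · rw [sup_comm, ← sup_inf_assoc_of_le C (inf_le_left : A ⊓ R ≤ A), sup_comm, hC2.sup_eq_top,
      top_inf_eq]

theorem aux_compl_nat {K E : Type*} [Field K] [AddCommGroup E] [Module K E]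
    (R : Submodule K E) (A : ℕ → Submodule K E) (hA : ∀ n, A n ≤ A (n + 1)) :
    ∃ W : ℕ → Submodule K E, ∀ n, W n ≤ W (n + 1) ∧ W n ≤ A n ∧ Disjoint (W n) R ∧
      W n ⊔ (A n ⊓ R) = A n := by
  choose! f h1 h2 h3 h4 using fun n W => aux_compl_step R (A n) W
  let W : ℕ → Submodule K E := fun n => Nat.rec (f 0 ⊥) (fun n W => f (n + 1) W) n
  have key : ∀ n, W n ≤ A n ∧ Disjoint (W n) R ∧ W n ⊔ (A n ⊓ R) = A n := by
    intro n
    induction n with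
    | zero => exact ⟨h2 _ _ bot_le disjoint_bot_left, h3 _ _ bot_le disjoint_bot_left,
        h4 _ _ bot_le disjoint_bot_left⟩
    | succ n ih =>
      have hle := ih.1.trans (hA n)
      exact ⟨h2 _ _ hle ih.2.1, h3 _ _ hle ih.2.1, h4 _ _ hle ih.2.1⟩
  exact ⟨W, fun n => ⟨h1 (n + 1) _ ((key n).1.trans (hA n)) (key n).2.1, key n⟩⟩

theorem aux_compl_fin {K E : Type*} [Field K] [AddCommGroup E] [Module K E] {p : ℕ}
    (R : Submodule K E) (A : Fin p → Submodule K E) (hA : ∀ i j, i ≤ j → A j ≤ A i) :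
    ∃ W : Fin p → Submodule K E,
      (∀ i j : Fin p, (i : ℕ) + 1 = j → W j ≤ W i) ∧
      ∀ m, W m ≤ A m ∧ Disjoint (W m) R ∧ W m ⊔ (A m ⊓ R) = A m := by
  rcases Nat.eq_zero_or_pos p with rfl | hp
  · exact ⟨A, fun i => i.elim0, fun m => m.elim0⟩
  obtain ⟨W, hW⟩ := aux_compl_nat R (fun n => A ⟨p - 1 - n, by omega⟩)
    (fun n => hA _ _ (by simp only [Fin.mk_le_mk]; omega))
  refine ⟨fun m => W (p - 1 - m), fun i j h => ?_, fun m => ?_⟩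
  · have := (hW (p - 1 - j)).1
    have e : p - 1 - (j : ℕ) + 1 = p - 1 - i := by omega
    rwa [e] at this
  · have := (hW (p - 1 - m)).2
    have e : (⟨p - 1 - (p - 1 - m), by omega⟩ : Fin p) = m := by
      ext; simp only; omega
    rwa [e] at this

/-- **Theorem 2.3 including the `moreover' part.**  In addition to the conclusions of the
decomposition theorem for a chain `T (p-1) ≤ … ≤ T 0` of subspaces of `End(V)` with
`T (p-1) ≠ 0`, if every element of `T 0` (the largest subspace, `T_1` of the paper) is
nilpotent and `T 0` commutes elementwise with `T p₀` (`0`-based index `p₀`), then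
`(W 0 0 · v 0) ∩ span {v 0, …, v (s p₀ - 1)} = 0`. -/
theorem chain_decomposition_nilpotent
    (K : Type) [Field K] [CharZero K]
    (V : Type) [AddCommGroup V] [Module K V] [FiniteDimensional K V]
    (p : ℕ) (hp : 0 < p) (T : Fin p → Submodule K (Module.End K V))
    (hchain : ∀ i j : Fin p, i ≤ j → T j ≤ T i)
    (hbot : T ⟨p - 1, by omega⟩ ≠ ⊥)
    (p₀ : Fin p)
    (hnil : ∀ f ∈ T ⟨0, hp⟩, IsNilpotent f)
    (hcomm : ∀ f ∈ T ⟨0, hp⟩, ∀ g ∈ T p₀, g * f = f * g) :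
    ∃ (s : Fin p → ℕ) (v : ℕ → V) (W : Fin p → ℕ → Submodule K (Module.End K V)),
      (∀ i j : Fin p, i ≤ j → s j ≤ s i) ∧ (∀ m : Fin p, 1 ≤ s m) ∧
      LinearIndependent K (fun j : Fin (s ⟨0, hp⟩) => v j) ∧
      -- (1) internal direct sums, compatible with the chain
      (∀ m : Fin p, iSupIndep (fun j : Fin (s m) => W m j)) ∧
      (∀ m : Fin p, (⨆ j : Fin (s m), W m j) = T m) ∧
      (∀ (m : ℕ) (h : m + 1 < p), ∀ j < s ⟨m + 1, h⟩,
        W ⟨m + 1, h⟩ j ≤ W ⟨m, by omega⟩ j) ∧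
      -- (2)
      (∀ m : Fin p, ∀ j < s m,
        finrank K (W m j) = finrank K ((W m j).map (LinearMap.applyₗ (v j)))) ∧
      -- (3)
      (∀ m : Fin p, ∀ i j : ℕ, i < j → j < s m →
        (W m j).map (LinearMap.applyₗ (v i)) = ⊥) ∧
      -- (4)
      (∀ m : Fin p, ∀ i j : ℕ, i < j → j < s m →
        ∀ f ∈ W m j, ∀ x : V, f x ∈ (W m i).map (LinearMap.applyₗ (v i))) ∧
      -- (5)
      ((W ⟨0, hp⟩ 0).map (LinearMap.applyₗ (v 0)) ⊓
          Submodule.span K (Set.range fun j : Fin (s p₀) => v j) = ⊥) := by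
  classical
  choose g hg using fun U : Fin p → Submodule K (Module.End K V) => aux_generic U
  obtain ⟨U, hU0, hUs'⟩ : ∃ U : ℕ → Fin p → Submodule K (Module.End K V), U 0 = T ∧
      ∀ n m, U (n + 1) m =
        U n m ⊓ LinearMap.ker (LinearMap.applyₗ (R := K) (M₂ := V) (g (U n))) :=
    ⟨fun n => Nat.rec T (fun _ A m =>
      A m ⊓ LinearMap.ker (LinearMap.applyₗ (R := K) (M₂ := V) (g A))) n, rfl, fun _ _ => rfl⟩
  obtain ⟨v, hv⟩ : ∃ v : ℕ → V, ∀ n, v n = g (U n) := ⟨fun n => g (U n), fun _ => rfl⟩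
  have hUs : ∀ n m, U (n + 1) m =
      U n m ⊓ LinearMap.ker (LinearMap.applyₗ (R := K) (M₂ := V) (v n)) := by
    intro n m
    rw [hv, hUs']
  have hgen : ∀ n m, ∀ S ∈ U n m, S (v n) = 0 → ∀ x,
      S x ∈ (U n m).map (LinearMap.applyₗ (v n)) := by
    intro n
    rw [hv]
    exact hg (U n)
  have hUchain : ∀ n, ∀ i j : Fin p, i ≤ j → U n j ≤ U n i := by
    intro n
    induction n with
    | zero => rw [hU0]; exact hchain
    | succ n ih =>
      intro i j hij
      rw [hUs, hUs]
      exact inf_le_inf_right _ (ih i j hij)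
  have hUanti : ∀ m, Antitone (fun n => U n m) := fun m =>
    antitone_nat_of_succ_le fun n => by rw [hUs]; exact inf_le_left
  have hUker : ∀ m i j, i < j → ∀ S ∈ U j m, S (v i) = 0 := by
    intro m i j hij S hS
    have := hUanti m (Nat.succ_le_of_lt hij) hS
    simp only [Nat.succ_eq_add_one, hUs] at this
    exact this.2
  have hUne : ∀ n m, U n m ≠ ⊥ → ∃ S ∈ U n m, S (v n) ≠ 0 := by
    intro n m hne
    by_contra hcon
    push Not at hcon
    apply hne
    rw [eq_bot_iff]
    intro S hS
    rw [Submodule.mem_bot]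
    ext x
    obtain ⟨S', hS', h⟩ := hgen n m S hS (hcon S hS) x
    rw [← h]
    exact hcon S' hS'
  have hex : ∀ m : Fin p, ∃ n : ℕ, U n m = ⊥ := by
    intro m
    by_contra hcon
    push Not at hcon
    have hlt : ∀ n : ℕ, finrank K ↥(U (n + 1) m) < finrank K ↥(U n m) := by
      intro n
      apply Submodule.finrank_lt_finrank_of_lt
      refine lt_of_le_of_ne (hUanti m (Nat.le_succ n)) fun h => ?_
      obtain ⟨S, hS, hne⟩ := hUne n m (hcon n)
      rw [← h] at hS
      exact hne (hUker m n (n + 1) (Nat.lt_succ_self n) S hS)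
    have : ∀ n : ℕ, finrank K ↥(U n m) + n ≤ finrank K ↥(U 0 m) := by
      intro n
      induction n with
      | zero => simp
      | succ n ih => have := hlt n; omega
    have h1 := this (finrank K ↥(U 0 m) + 1)
    omega
  have hex2 : ∀ m : Fin p, ∃ n : ℕ, U n m = ⊥ ∧ ∀ k : ℕ, U k m = ⊥ → n ≤ k := fun m =>
    ⟨Nat.find (hex m), Nat.find_spec (hex m), fun k hk => Nat.find_min' (hex m) hk⟩
  choose s hs hsmin using hex2
  have hslt : ∀ m j, j < s m → U j m ≠ ⊥ := fun m j h h2 =>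
    absurd (hsmin m j h2) (by omega)
  choose W' hWchain hW using fun n =>
    aux_compl_fin (LinearMap.ker (LinearMap.applyₗ (R := K) (M₂ := V) (v n))) (U n) (hUchain n)
  have hWU : ∀ n m, W' n m ≤ U n m := fun n m => (hW n m).1
  have hWd : ∀ n m, ∀ f ∈ W' n m, f (v n) = 0 → f = 0 := by
    intro n m f hf h
    exact (Submodule.disjoint_def.1 (hW n m).2.1) f hf h
  have hWs : ∀ n m, W' n m ⊔ U (n + 1) m = U n m := fun n m => by
    rw [hUs]; exact (hW n m).2.2
  have hWmap : ∀ n m, (W' n m).map (LinearMap.applyₗ (v n)) =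
      (U n m).map (LinearMap.applyₗ (v n)) := by
    intro n m
    apply le_antisymm (Submodule.map_mono (hWU n m))
    rw [← hWs, Submodule.map_sup]
    refine sup_le le_rfl ?_
    rintro _ ⟨S, hS, rfl⟩
    rw [LinearMap.applyₗ_apply_apply, hUker m n (n + 1) (Nat.lt_succ_self n) S hS]
    exact zero_mem _
  have hspan : ∀ n m, ∀ S ∈ U n m, ∀ y ∈ Submodule.span K (Set.range fun j : Fin n => v j),
      S y = 0 := by
    intro n m S hS y hy
    have : Submodule.span K (Set.range fun j : Fin n => v j) ≤ LinearMap.ker S := by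
      rw [Submodule.span_le]
      rintro _ ⟨j, rfl⟩
      exact hUker m j n j.2 S hS
    exact this hy
  refine ⟨s, v, fun m j => W' j m, ?_, ?_, ?_, ?_, ?_, ?_, ?_, ?_, ?_, ?_⟩
  · intro i j hij
    apply hsmin
    rw [eq_bot_iff, ← hs i]
    exact hUchain _ i j hij
  · intro m
    rw [Nat.one_le_iff_ne_zero]
    intro h
    have h1 := hs m
    rw [h, hU0] at h1
    apply hbot
    rw [eq_bot_iff, ← h1]
    apply hchain
    rw [Fin.le_def]
    have := m.2
    simp only
    omega
  · have : ∀ n, n ≤ s ⟨0, hp⟩ → LinearIndependent K (fun j : Fin n => v j) := by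
      intro n
      induction n with
      | zero => intro _; exact linearIndependent_empty_type
      | succ n ih =>
        intro hn
        rw [linearIndependent_finSucc']
        refine ⟨ih (by omega), fun hmem => ?_⟩
        obtain ⟨S, hS, hne⟩ := hUne n _ (hslt ⟨0, hp⟩ n (by omega))
        exact hne (hspan n _ S hS _ hmem)
    exact this _ le_rfl
  · intro m
    rw [iSupIndep_iff_finsetSum_eq_zero_imp_eq_zero]
    intro t f hf hsum
    have key : ∀ n, ∀ i ∈ t, (i : ℕ) = n → f i = 0 := by
      intro n
      induction n using Nat.strong_induction_on with
      | _ n ih =>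
        intro i hi hin
        apply hWd i m _ (hf i hi)
        have h1 : (∑ j ∈ t, f j) (v i) = 0 := by rw [hsum]; rfl
        rw [LinearMap.sum_apply, Finset.sum_eq_single i] at h1
        · exact h1
        · intro j hj hji
          rcases lt_or_gt_of_ne (fun h => hji (Fin.ext h) : (j : ℕ) ≠ i) with h | h
          · rw [ih j (by omega) j hj rfl]; rfl
          · exact hUker m i j h _ (hWU _ _ (hf j hj))
        · intro h; exact absurd hi h
    exact fun i hi => key _ i hi rfl
  · intro m
    apply le_antisymm
    · rw [← hU0]; exact iSup_le fun j => (hWU j m).trans (hUanti m (Nat.zero_le j))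
    · have : ∀ n, n ≤ s m → T m ≤ (⨆ j : Fin (s m), W' j m) ⊔ U n m := by
        intro n
        induction n with
        | zero => intro _; rw [hU0]; exact le_sup_right
        | succ n ih =>
          intro hn
          refine (ih (by omega)).trans (sup_le le_sup_left ?_)
          rw [← hWs n m]
          exact sup_le_sup_right (le_iSup (fun j : Fin (s m) => W' j m) ⟨n, by omega⟩) _
      have h := this _ le_rfl
      rwa [hs, sup_bot_eq] at h
  · intro m h j _
    exact hWchain j _ _ rfl
  · intro m j _
    refine (LinearEquiv.ofBijective ((LinearMap.applyₗ (R := K) (M₂ := V) (v j)).submoduleMap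
      (W' j m)) ⟨?_, LinearMap.submoduleMap_surjective _ _⟩).finrank_eq
    rw [← LinearMap.ker_eq_bot, LinearMap.ker_eq_bot']
    intro f hf
    ext1
    exact hWd j m f f.2 (congrArg Subtype.val hf)
  · intro m i j hij _
    rw [eq_bot_iff]
    rintro _ ⟨S, hS, rfl⟩
    exact hUker m i j hij S (hWU _ _ hS)
  · intro m i j hij _ f hf x
    rw [hWmap]
    exact hgen i m f (hUanti m hij.le (hWU _ _ hf)) (hUker m i j hij f (hWU _ _ hf)) x
  · rw [eq_bot_iff]
    rintro _ ⟨⟨f, hf, rfl⟩, hx⟩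
    have hfT : f ∈ T ⟨0, hp⟩ := hU0 ▸ hWU 0 _ hf
    rw [Submodule.mem_bot]
    rw [LinearMap.applyₗ_apply_apply] at hx ⊢
    have key : ∀ n, n ≤ s p₀ →
        f (v 0) ∈ Submodule.span K (Set.range fun j : Fin n => v j) → f (v 0) = 0 := by
      intro n
      induction n with
      | zero => intro _ h; simpa using h
      | succ n ih =>
        intro hn h
        have hr : (Set.range fun j : Fin (n + 1) => v j) =
            insert (v n) (Set.range fun j : Fin n => v j) := by
          ext y
          simp only [Set.mem_range, Set.mem_insert_iff]
          constructor
          · rintro ⟨j, rfl⟩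
            by_cases hj : (j : ℕ) = n
            · left; rw [hj]
            · right; exact ⟨⟨j, by omega⟩, rfl⟩
          · rintro (rfl | ⟨j, rfl⟩)
            · exact ⟨⟨n, by omega⟩, rfl⟩
            · exact ⟨⟨j, by omega⟩, rfl⟩
        rw [hr, Submodule.mem_span_insert] at h
        obtain ⟨c, y, hy, hxy⟩ := h
        rcases Nat.eq_zero_or_pos n with rfl | hn0
        · have hy0 : y = 0 := by simpa using hy
          rw [hy0, add_zero] at hxy
          obtain ⟨N, hN⟩ := hnil f hfT
          have hpow : ∀ N : ℕ, (f ^ N) (v 0) = c ^ N • v 0 := by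
            intro N
            induction N with
            | zero => simp
            | succ N ihN =>
              rw [pow_succ', Module.End.mul_apply, ihN, map_smul, hxy, smul_smul, pow_succ]
          have h1 := hpow N
          rw [hN, LinearMap.zero_apply] at h1
          rcases smul_eq_zero.1 h1.symm with h2 | h2
          · rw [hxy, eq_zero_of_pow_eq_zero h2, zero_smul]
          · rw [h2, map_zero]
        · obtain ⟨S, hS, hne⟩ := hUne n _ (hslt p₀ n (by omega))
          have hST : S (f (v 0)) = f (S (v 0)) :=
            LinearMap.congr_fun (hcomm f hfT S (hU0 ▸ hUanti p₀ (Nat.zero_le n) hS)) (v 0)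
          rw [hUker p₀ 0 n hn0 S hS, map_zero, hxy, map_add, hspan n p₀ S hS y hy, add_zero,
            map_smul] at hST
          rcases smul_eq_zero.1 hST with h2 | h2
          · apply ih (by omega)
            rw [hxy, h2, zero_smul, zero_add]
            exact hy
          · exact absurd h2 hne
    exact key _ le_rfl hx
end

section
/- Let p_0 ≥ 2 be an integer and let N, M be real numbers with M > 0 and N ≥ M. Then: (i) if N ≥ ((p_0−1)² + p_0²)·M, then sqrt( (2p_0/(p_0−1))·(N − M) ) ≥ sqrt( (2(p_0+1)/p_0)·N ); (ii) if p_0 ≥ 3 and N ≤ ((p_0−1)² + p_0²)·M, then sqrt( (2(p_0−1)/(p_0−2))·N + (2p_0(p_0−1)/(p_0−2)²)·M ) − (2/(p_0−2))·sqrt(M) ≥ sqrt( (2(p_0+1)/p_0)·N ); (iii) if p_0 = 2 and N ≤ 5·M, then (N + 3·M)/(2·sqrt(M)) ≥ sqrt(3·N). -/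
/-- **Final assertion of Theorem 3.6.**  For an integer `p₀ ≥ 2` and real numbers
`N ≥ M > 0`:
(i) if `N ≥ ((p₀-1)² + p₀²)·M` then `√((2p₀/(p₀-1))·(N-M)) ≥ √((2(p₀+1)/p₀)·N)`;
(ii) if `p₀ ≥ 3` and `N ≤ ((p₀-1)² + p₀²)·M` then
`√((2(p₀-1)/(p₀-2))·N + (2p₀(p₀-1)/(p₀-2)²)·M) - (2/(p₀-2))·√M ≥ √((2(p₀+1)/p₀)·N)`;
(iii) if `p₀ = 2` and `N ≤ 5M` then `(N + 3M)/(2√M) ≥ √(3N)`. -/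
theorem bounds_ge_first_bound
    (p₀ : ℕ) (hp₀ : 2 ≤ p₀) (N M : ℝ) (hM : 0 < M) (hNM : M ≤ N) :
    (((((p₀ : ℝ) - 1) ^ 2 + (p₀ : ℝ) ^ 2) * M ≤ N →
        Real.sqrt ((2 * ((p₀ : ℝ) + 1) / p₀) * N) ≤
          Real.sqrt ((2 * (p₀ : ℝ) / ((p₀ : ℝ) - 1)) * (N - M))) ∧
      (3 ≤ p₀ → N ≤ (((p₀ : ℝ) - 1) ^ 2 + (p₀ : ℝ) ^ 2) * M →
        Real.sqrt ((2 * ((p₀ : ℝ) + 1) / p₀) * N) ≤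
          Real.sqrt ((2 * ((p₀ : ℝ) - 1) / ((p₀ : ℝ) - 2)) * N +
              (2 * (p₀ : ℝ) * ((p₀ : ℝ) - 1) / ((p₀ : ℝ) - 2) ^ 2) * M) -
            (2 / ((p₀ : ℝ) - 2)) * Real.sqrt M) ∧
      (p₀ = 2 → N ≤ 5 * M →
        Real.sqrt (3 * N) ≤ (N + 3 * M) / (2 * Real.sqrt M))) := by
  have hp : (2:ℝ) ≤ p₀ := by exact_mod_cast hp₀
  have hN : 0 < N := lt_of_lt_of_le hM hNM
  refine ⟨fun h => ?_, fun h3 _ => ?_, fun _ _ => ?_⟩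
  · generalize (p₀ : ℝ) = p at *
    apply Real.sqrt_le_sqrt
    have h1 : 0 < p - 1 := by linarith
    have h0 : 0 < p := by linarith
    have e : (2 * p / (p - 1)) * (N - M) - (2 * (p + 1) / p) * N
        = 2 * (N - p ^ 2 * M) / (p * (p - 1)) := by
      field_simp
      ring
    have h2 : 0 ≤ N - p ^ 2 * M := by nlinarith [mul_nonneg (sq_nonneg (p - 1)) hM.le]
    have h4 : 0 ≤ 2 * (N - p ^ 2 * M) / (p * (p - 1)) := by positivity
    linarith
  · have hp3 : (3:ℝ) ≤ p₀ := by exact_mod_cast h3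
    generalize (p₀ : ℝ) = p at *
    have h0 : 0 < p := by linarith
    obtain ⟨q, rfl⟩ : ∃ q, p = q + 2 := ⟨p - 2, by ring⟩
    have hq : 0 < q := by linarith
    have hs : Real.sqrt ((2 * (q + 2 + 1) / (q + 2)) * N) ^ 2 = (2 * (q + 2 + 1) / (q + 2)) * N :=
      Real.sq_sqrt (by positivity)
    have hm : Real.sqrt M ^ 2 = M := Real.sq_sqrt hM.le
    generalize Real.sqrt ((2 * (q + 2 + 1) / (q + 2)) * N) = s at *
    generalize Real.sqrt M = m at *
    subst hm
    have hN' : N = (q + 2) * s ^ 2 / (2 * (q + 3)) := by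
      rw [hs]
      field_simp
      ring
    rw [le_sub_iff_add_le]
    apply Real.le_sqrt_of_sq_le
    rw [hN']
    have e : (2 * (q + 2 - 1) / (q + 2 - 2)) * ((q + 2) * s ^ 2 / (2 * (q + 3))) +
        (2 * (q + 2) * (q + 2 - 1) / (q + 2 - 2) ^ 2) * m ^ 2 - (s + 2 / (q + 2 - 2) * m) ^ 2
        = 2 * (s - (q + 3) * m) ^ 2 / (q * (q + 3)) := by
      rw [show q + 2 - 2 = q by ring]
      field_simp
      ring
    have h4 : 0 ≤ 2 * (s - (q + 3) * m) ^ 2 / (q * (q + 3)) := by positivity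
    linarith
  · have hm : Real.sqrt M ^ 2 = M := Real.sq_sqrt hM.le
    have hm0 : 0 < Real.sqrt M := Real.sqrt_pos.2 hM
    have ht : Real.sqrt (3 * N) ^ 2 = 3 * N := Real.sq_sqrt (by positivity)
    rw [le_div_iff₀ (by positivity)]
    nlinarith [sq_nonneg (Real.sqrt (3 * N) - 3 * Real.sqrt M)]
end

section
/- Let p_0 ≥ 1 be an integer and let N > 0 be a real number. For positive real numbers a_0, a_1, ..., a_{p_0−1}, t, set r_i = a_i + a_{i+1} + ⋯ + a_{p_0−1} + t for 0 ≤ i ≤ p_0−1 and r_{p_0} = t. Then the minimum of r_0 = a_0 + a_1 + ⋯ + a_{p_0−1} + t over all positive real tuples (a_0, ..., a_{p_0−1}, t) satisfying Σ_{i=0}^{p_0−1} a_i·r_{i+1} ≥ N is exactly sqrt( (2(p_0+1)/p_0)·N ); in particular every such tuple satisfies r_0 ≥ sqrt( (2(p_0+1)/p_0)·N ), with equality attained when a_0 = a_1 = ⋯ = a_{p_0−1} = t = sqrt( 2N/(p_0(p_0+1)) ). -/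
theorem aux_identity (a : ℕ → ℝ) (p : ℕ) : ∀ t : ℝ,
    2 * (∑ i ∈ Finset.range p, a i * ((∑ j ∈ Finset.Ico (i + 1) p, a j) + t))
      + (∑ i ∈ Finset.range p, a i ^ 2) + t ^ 2 = ((∑ i ∈ Finset.range p, a i) + t) ^ 2 := by
  induction p with
  | zero => intro t; simp
  | succ p ih =>
    intro t
    have h := ih (a p + t)
    have e : ∑ i ∈ Finset.range p, a i * ((∑ j ∈ Finset.Ico (i + 1) (p + 1), a j) + t)
        = ∑ i ∈ Finset.range p, a i * ((∑ j ∈ Finset.Ico (i + 1) p, a j) + (a p + t)) := by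
      apply Finset.sum_congr rfl
      intro i hi
      have hi' := Finset.mem_range.mp hi
      rw [Finset.sum_Ico_succ_top (by omega)]
      ring
    rw [Finset.sum_range_succ, Finset.sum_range_succ, Finset.sum_range_succ, e]
    simp only [Finset.Ico_self, Finset.sum_empty]
    linear_combination h

/-- **First simplification of Problem 3.3 with real variables.**  For an integer `p₀ ≥ 1` and
a real `N > 0`, the minimum of `r₀ = a 0 + … + a (p₀-1) + t` over all positive real tuples
`(a 0, …, a (p₀-1), t)` satisfying `∑_{i=0}^{p₀-1} a i · r (i+1) ≥ N`, where
`r i = a i + … + a (p₀-1) + t`, is exactly `√((2(p₀+1)/p₀)·N)`; in particular every such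
tuple satisfies `r₀ ≥ √((2(p₀+1)/p₀)·N)`, with equality attained at the constant tuple
`a 0 = … = a (p₀-1) = t = √(2N/(p₀(p₀+1)))`. -/
theorem first_simplification_min
    (p₀ : ℕ) (hp₀ : 1 ≤ p₀) (N : ℝ) (hN : 0 < N) :
    IsLeast {r : ℝ | ∃ (a : ℕ → ℝ) (t : ℝ),
        (∀ i < p₀, 0 < a i) ∧ 0 < t ∧
        N ≤ (∑ i ∈ Finset.range p₀, a i * ((∑ j ∈ Finset.Ico (i + 1) p₀, a j) + t)) ∧
        r = (∑ i ∈ Finset.range p₀, a i) + t}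
      (Real.sqrt ((2 * ((p₀ : ℝ) + 1) / p₀) * N)) ∧
    (∀ c : ℝ, c = Real.sqrt (2 * N / ((p₀ : ℝ) * ((p₀ : ℝ) + 1))) →
      N ≤ (∑ i ∈ Finset.range p₀, c * ((∑ _j ∈ Finset.Ico (i + 1) p₀, c) + c)) ∧
      (∑ _i ∈ Finset.range p₀, c) + c = Real.sqrt ((2 * ((p₀ : ℝ) + 1) / p₀) * N)) := by
  have hp : (0 : ℝ) < p₀ := by exact_mod_cast hp₀
  have key : ∀ c : ℝ, c = Real.sqrt (2 * N / ((p₀ : ℝ) * ((p₀ : ℝ) + 1))) →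
      N ≤ (∑ i ∈ Finset.range p₀, c * ((∑ _j ∈ Finset.Ico (i + 1) p₀, c) + c)) ∧
      (∑ _i ∈ Finset.range p₀, c) + c = Real.sqrt ((2 * ((p₀ : ℝ) + 1) / p₀) * N) := by
    intro c hc
    have hc0 : 0 ≤ c := hc ▸ Real.sqrt_nonneg _
    have hc2 : c ^ 2 = 2 * N / ((p₀ : ℝ) * ((p₀ : ℝ) + 1)) := by
      rw [hc, Real.sq_sqrt (by positivity)]
    have hN' : c ^ 2 * ((p₀ : ℝ) * ((p₀ : ℝ) + 1)) = 2 * N := by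
      rw [hc2]; field_simp
    constructor
    · have h := aux_identity (fun _ => c) p₀ c
      have e1 : ∑ _i ∈ Finset.range p₀, c = p₀ * c := by simp
      have e2 : ∑ _i ∈ Finset.range p₀, c ^ 2 = p₀ * c ^ 2 := by simp
      beta_reduce at h
      rw [e1, e2] at h
      nlinarith
    · have e1 : ∑ _i ∈ Finset.range p₀, c = p₀ * c := by simp
      rw [e1]
      symm
      rw [Real.sqrt_eq_iff_mul_self_eq (by positivity) (by positivity)]
      have : N = c ^ 2 * ((p₀ : ℝ) * ((p₀ : ℝ) + 1)) / 2 := by linarith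
      rw [this]
      field_simp
  refine ⟨⟨?_, ?_⟩, key⟩
  · obtain ⟨h1, h2⟩ := key _ rfl
    have hpos : 0 < Real.sqrt (2 * N / ((p₀ : ℝ) * ((p₀ : ℝ) + 1))) :=
      Real.sqrt_pos.mpr (by positivity)
    exact ⟨fun _ => _, _, fun _ _ => hpos, hpos, h1, h2.symm⟩
  · rintro r ⟨a, t, ha, ht, hS, rfl⟩
    have hA : 0 ≤ ∑ i ∈ Finset.range p₀, a i :=
      Finset.sum_nonneg fun i hi => (ha i (Finset.mem_range.mp hi)).le
    apply Real.sqrt_le_iff.mpr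
    refine ⟨by positivity, ?_⟩
    have h := aux_identity a p₀ t
    have hcs := sq_sum_le_card_mul_sum_sq (s := Finset.range p₀) (f := a)
    rw [Finset.card_range] at hcs
    generalize (∑ i ∈ Finset.range p₀, a i * ((∑ j ∈ Finset.Ico (i + 1) p₀, a j) + t)) = S at *
    generalize (∑ i ∈ Finset.range p₀, a i ^ 2) = Q at *
    generalize (∑ i ∈ Finset.range p₀, a i) = A at *
    have h3 : (A + t) ^ 2 ≤ ((p₀ : ℝ) + 1) * (Q + t ^ 2) := by
      have : (p₀ : ℝ) * (A + t) ^ 2 ≤ p₀ * (((p₀ : ℝ) + 1) * (Q + t ^ 2)) := by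
        nlinarith [sq_nonneg (A - p₀ * t),
          mul_le_mul_of_nonneg_left hcs (by positivity : (0 : ℝ) ≤ (p₀ : ℝ) + 1)]
      exact le_of_mul_le_mul_left this hp
    rw [div_mul_eq_mul_div, div_le_iff₀ hp]
    have h4 : Q + t ^ 2 = (A + t) ^ 2 - 2 * S := by linarith
    rw [h4] at h3
    nlinarith [mul_le_mul_of_nonneg_left hS (by positivity : (0 : ℝ) ≤ (p₀ : ℝ) + 1)]
end

section
/- Let p_0 ≥ 2 be an integer and let N, M be real numbers with M > 0 and N ≥ ((p_0−1)² + p_0²)·M. For positive real numbers a_0, a_1, ..., a_{p_0−1}, t, set r_i = a_i + a_{i+1} + ⋯ + a_{p_0−1} + t for 0 ≤ i ≤ p_0−1 and r_{p_0} = t. Then every positive real tuple (a_0, ..., a_{p_0−1}, t) satisfying the two constraints Σ_{i=0}^{p_0−1} a_i·r_{i+1} = N and a_0·t = M satisfies r_0 = a_0 + a_1 + ⋯ + a_{p_0−1} + t ≥ sqrt( (2p_0/(p_0−1))·(N − M) ). -/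
theorem sq_expand (a : ℕ → ℝ) (n : ℕ) : ∀ t : ℝ,
    ((∑ i ∈ Finset.range n, a i) + t) ^ 2 = (∑ i ∈ Finset.range n, a i ^ 2) + t ^ 2
      + 2 * ∑ i ∈ Finset.range n, a i * ((∑ j ∈ Finset.Ico (i + 1) n, a j) + t) := by
  induction n with
  | zero => intro t; simp
  | succ n ih =>
    intro t
    have h := ih (a n + t)
    have h2 : ∑ i ∈ Finset.range n, a i * ((∑ j ∈ Finset.Ico (i + 1) (n + 1), a j) + t)
        = ∑ i ∈ Finset.range n, a i * ((∑ j ∈ Finset.Ico (i + 1) n, a j) + (a n + t)) := by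
      apply Finset.sum_congr rfl
      intro i hi
      rw [Finset.sum_Ico_succ_top (by have := Finset.mem_range.mp hi; omega)]
      ring
    rw [Finset.sum_range_succ, Finset.sum_range_succ, Finset.sum_range_succ, h2]
    simp only [Finset.Ico_self, Finset.sum_empty]
    linarith

/-- **Second simplification of Problem 3.3 with real variables, case
`N ≥ ((p₀-1)² + p₀²)·M`.**  For an integer `p₀ ≥ 2` and reals `M > 0`,
`N ≥ ((p₀-1)² + p₀²)·M`, every positive real tuple `(a 0, …, a (p₀-1), t)` satisfying
`∑_{i=0}^{p₀-1} a i · r (i+1) = N` and `a 0 · t = M`, where `r i = a i + … + a (p₀-1) + t`,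
satisfies `r₀ = a 0 + … + a (p₀-1) + t ≥ √((2p₀/(p₀-1))·(N - M))`. -/
theorem second_simplification_case1
    (p₀ : ℕ) (hp₀ : 2 ≤ p₀) (N M : ℝ) (hM : 0 < M)
    (hNM : (((p₀ : ℝ) - 1) ^ 2 + (p₀ : ℝ) ^ 2) * M ≤ N)
    (a : ℕ → ℝ) (t : ℝ) (ha : ∀ i < p₀, 0 < a i) (ht : 0 < t)
    (hconstr : (∑ i ∈ Finset.range p₀, a i * ((∑ j ∈ Finset.Ico (i + 1) p₀, a j) + t)) = N)
    (hM' : a 0 * t = M) :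
    Real.sqrt ((2 * (p₀ : ℝ) / ((p₀ : ℝ) - 1)) * (N - M)) ≤
      (∑ i ∈ Finset.range p₀, a i) + t := by
  have hex := sq_expand a p₀ t
  rw [hconstr] at hex
  obtain ⟨k, rfl⟩ : ∃ k, p₀ = k + 1 := ⟨p₀ - 1, by omega⟩
  have hk : (0 : ℝ) < k := by
    have : 0 < k := by omega
    exact_mod_cast this
  have hR : 0 ≤ (∑ i ∈ Finset.range (k + 1), a i) + t :=
    add_nonneg (Finset.sum_nonneg fun i hi => (ha i (Finset.mem_range.mp hi)).le) ht.le
  have hcs := sq_sum_le_card_mul_sum_sq (s := Finset.range (k + 1))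
    (f := fun i => if i = 0 then a 0 + t else a i)
  rw [Finset.sum_range_succ', Finset.sum_range_succ'] at hcs
  simp only [Nat.add_eq_zero_iff, one_ne_zero, and_false, if_false, if_true,
    Finset.card_range] at hcs
  apply Real.sqrt_le_left hR |>.mpr
  rw [Finset.sum_range_succ', Finset.sum_range_succ'] at hex
  rw [Finset.sum_range_succ']
  push_cast at hcs ⊢
  rw [add_sub_cancel_right, div_mul_eq_mul_div, div_le_iff₀ hk]
  have e : ∑ i ∈ Finset.range k, a (i + 1) ^ 2 + (a 0 + t) ^ 2
      = (∑ i ∈ Finset.range k, a (i + 1) + a 0 + t) ^ 2 - 2 * (N - M) := by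
    rw [hex, ← hM']; ring
  rw [e, ← add_assoc] at hcs
  linarith
end

section
/- Let p_0 ≥ 3 be an integer and let N, M be real numbers with M > 0 and N ≤ ((p_0−1)² + p_0²)·M. For positive real numbers a_0, a_1, ..., a_{p_0−1}, t, set r_i = a_i + a_{i+1} + ⋯ + a_{p_0−1} + t for 0 ≤ i ≤ p_0−1 and r_{p_0} = t. Then every positive real tuple (a_0, ..., a_{p_0−1}, t) satisfying the two constraints Σ_{i=0}^{p_0−1} a_i·r_{i+1} = N and a_0·t = M satisfies r_0 = a_0 + a_1 + ⋯ + a_{p_0−1} + t ≥ sqrt( (2(p_0−1)/(p_0−2))·N + (2p_0(p_0−1)/(p_0−2)²)·M ) − (2/(p_0−2))·sqrt(M). -/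
theorem aux_e2 (a : ℕ → ℝ) (p : ℕ) : ∀ t : ℝ,
    2 * (∑ i ∈ Finset.range p, a i * ((∑ j ∈ Finset.Ico (i + 1) p, a j) + t))
      + ∑ i ∈ Finset.range p, a i ^ 2 + t ^ 2 = ((∑ i ∈ Finset.range p, a i) + t) ^ 2 := by
  induction p with
  | zero => intro t; simp
  | succ p ih =>
    intro t
    have h := ih (a p + t)
    have e : ∑ i ∈ Finset.range p, a i * ((∑ j ∈ Finset.Ico (i + 1) (p + 1), a j) + t)
        = ∑ i ∈ Finset.range p, a i * ((∑ j ∈ Finset.Ico (i + 1) p, a j) + (a p + t)) := by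
      apply Finset.sum_congr rfl
      intro i hi
      rw [Finset.sum_Ico_succ_top (by have := Finset.mem_range.1 hi; omega)]
      ring
    rw [Finset.sum_range_succ, Finset.sum_range_succ, Finset.sum_range_succ, e]
    simp only [Finset.Ico_self, Finset.sum_empty]
    linear_combination h

theorem aux_real (k s N R x t S Q : ℝ) (hk : 1 ≤ k) (hs : 0 < s)
    (hN : N ≤ ((k + 1) ^ 2 + (k + 2) ^ 2) * s ^ 2) (hR : R = x + S + t)
    (hx : 0 < x) (ht : 0 < t) (hS : 0 ≤ S) (hM : x * t = s ^ 2)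
    (hQ : S ^ 2 ≤ (k + 1) * Q) (hE : 2 * N + (x ^ 2 + Q) + t ^ 2 = R ^ 2) :
    2 * (k + 1) * k * N + 2 * (k + 2) * (k + 1) * s ^ 2 ≤ (k * R + 2 * s) ^ 2 := by
  have hu : 2 * s ≤ x + t := by
    by_contra hc
    push Not at hc
    have : (x + t) ^ 2 < (2 * s) ^ 2 := by gcongr
    nlinarith [sq_nonneg (x - t)]
  obtain ⟨u, hu'⟩ : ∃ u, u = x + t := ⟨_, rfl⟩
  rw [← hu'] at hu
  have hSR : S = R - u := by rw [hR, hu']; ring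
  have hf : 2 * (k + 1) * N ≤ 2 * (k + 1) * (s ^ 2 + u * (R - u)) + k * (R - u) ^ 2 := by
    have h1 : x ^ 2 + t ^ 2 = u ^ 2 - 2 * s ^ 2 := by rw [hu', ← hM]; ring
    have h2 : 2 * N = R ^ 2 - u ^ 2 + 2 * s ^ 2 - Q := by linarith
    rw [hSR] at hQ
    have h3 : 2 * (k + 1) * N = (k + 1) * (R ^ 2 - u ^ 2 + 2 * s ^ 2 - Q) := by
      rw [← h2]; ring
    rw [h3]
    nlinarith
  rcases le_total R (2 * (k + 2) * s) with h | h
  · have h4 : 0 ≤ (u - 2 * s) * ((k + 2) * (u + 2 * s) - 2 * R) := by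
      apply mul_nonneg (by linarith)
      nlinarith
    have h5 : 2 * (k + 1) * N
        ≤ 2 * (k + 1) * (s ^ 2 + 2 * s * (R - 2 * s)) + k * (R - 2 * s) ^ 2 := by
      nlinarith
    have h6 := mul_le_mul_of_nonneg_left h5 (by linarith : 0 ≤ k)
    nlinarith
  · have h7 : (k * (2 * (k + 2) * s) + 2 * s) ^ 2 ≤ (k * R + 2 * s) ^ 2 := by
      gcongr
    have h8 := mul_le_mul_of_nonneg_left hN (by positivity : 0 ≤ 2 * (k + 1) * k)
    refine le_trans ?_ h7
    nlinarith

/-- **Second simplification of Problem 3.3 with real variables, case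
`N ≤ ((p₀-1)² + p₀²)·M`, `p₀ ≥ 3`.**  For an integer `p₀ ≥ 3` and reals `M > 0`,
`N ≤ ((p₀-1)² + p₀²)·M`, every positive real tuple `(a 0, …, a (p₀-1), t)` satisfying
`∑_{i=0}^{p₀-1} a i · r (i+1) = N` and `a 0 · t = M`, where `r i = a i + … + a (p₀-1) + t`,
satisfies
`r₀ = a 0 + … + a (p₀-1) + t ≥ √((2(p₀-1)/(p₀-2))·N + (2p₀(p₀-1)/(p₀-2)²)·M) - (2/(p₀-2))·√M`. -/
theorem second_simplification_case2
    (p₀ : ℕ) (hp₀ : 3 ≤ p₀) (N M : ℝ) (hM : 0 < M)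
    (hNM : N ≤ (((p₀ : ℝ) - 1) ^ 2 + (p₀ : ℝ) ^ 2) * M)
    (a : ℕ → ℝ) (t : ℝ) (ha : ∀ i < p₀, 0 < a i) (ht : 0 < t)
    (hconstr : (∑ i ∈ Finset.range p₀, a i * ((∑ j ∈ Finset.Ico (i + 1) p₀, a j) + t)) = N)
    (hM' : a 0 * t = M) :
    Real.sqrt ((2 * ((p₀ : ℝ) - 1) / ((p₀ : ℝ) - 2)) * N +
          (2 * (p₀ : ℝ) * ((p₀ : ℝ) - 1) / ((p₀ : ℝ) - 2) ^ 2) * M) -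
        (2 / ((p₀ : ℝ) - 2)) * Real.sqrt M ≤
      (∑ i ∈ Finset.range p₀, a i) + t := by
  obtain ⟨n, rfl⟩ : ∃ n, p₀ = n + 3 := ⟨p₀ - 3, by omega⟩
  have hE := aux_e2 a (n + 3) t
  rw [hconstr] at hE
  rw [Finset.sum_range_succ' (fun i => a i ^ 2)] at hE
  have hC := sq_sum_le_card_mul_sum_sq (s := Finset.range (n + 2)) (f := fun i => a (i + 1))
  have hS : 0 ≤ ∑ i ∈ Finset.range (n + 2), a (i + 1) := by
    apply Finset.sum_nonneg
    intro i hi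
    exact (ha (i + 1) (by have := Finset.mem_range.1 hi; omega)).le
  have hR := Finset.sum_range_succ' a (n + 2)
  have hs := Real.sqrt_pos.2 hM
  have hs2 := Real.sq_sqrt hM.le
  have hRpos : 0 ≤ (∑ i ∈ Finset.range (n + 3), a i) + t :=
    add_nonneg (Finset.sum_nonneg fun i hi => (ha i (Finset.mem_range.1 hi)).le) ht.le
  have hk : (1 : ℝ) ≤ (n : ℝ) + 1 := by
    have : (0 : ℝ) ≤ n := Nat.cast_nonneg n
    linarith
  obtain ⟨k, hkdef⟩ : ∃ k : ℝ, k = (n : ℝ) + 1 := ⟨_, rfl⟩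
  have e3 : ((n + 3 : ℕ) : ℝ) = k + 2 := by push_cast; linarith
  rw [Finset.card_range] at hC
  have e2 : ((n + 2 : ℕ) : ℝ) = k + 1 := by push_cast; linarith
  rw [e2] at hC
  rw [e3] at hNM ⊢
  rw [← hkdef] at hk
  have key := aux_real k (Real.sqrt M) N ((∑ i ∈ Finset.range (n + 3), a i) + t) (a 0) t _ _ hk hs
    (by rw [hs2]; convert hNM using 3; ring) (by rw [hR]; ring) (ha 0 (by omega)) ht hS
    (by rw [hs2, hM']) hC (by linarith)
  have hk0 : 0 < k := by linarith
  have hle : Real.sqrt ((2 * (k + 2 - 1) / (k + 2 - 2)) * N +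
      (2 * (k + 2) * (k + 2 - 1) / (k + 2 - 2) ^ 2) * M) ≤
      ((∑ i ∈ Finset.range (n + 3), a i) + t) + 2 / (k + 2 - 2) * Real.sqrt M := by
    have e4 : k + 2 - 2 = k := by ring
    have e5 : k + 2 - 1 = k + 1 := by ring
    rw [e4, e5]
    apply Real.sqrt_le_iff.2
    refine ⟨by positivity, ?_⟩
    have l : 2 * (k + 1) / k * N + 2 * (k + 2) * (k + 1) / k ^ 2 * M
        = (2 * (k + 1) * k * N + 2 * (k + 2) * (k + 1) * M) / k ^ 2 := by
      field_simp
    have r : (((∑ i ∈ Finset.range (n + 3), a i) + t) + 2 / k * Real.sqrt M) ^ 2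
        = (k * ((∑ i ∈ Finset.range (n + 3), a i) + t) + 2 * Real.sqrt M) ^ 2 / k ^ 2 := by
      field_simp
    rw [l, r]
    rw [hs2] at key
    gcongr
  linarith
end
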